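/- Let φ = C_1 ∧ ⋯ ∧ C_k be a 3-SAT formula in Boolean variables y_1, …, y_n, where each clause C_i = y_{i_1}^{τ_{i_1}} ∨ y_{i_2}^{τ_{i_2}} ∨ y_{i_3}^{τ_{i_3}} is a disjunction of three literals on pairwise distinct variables (here y^1 = y and y^0 = ¬y). For 1 ≤ j ≤ n let h_j be the tropical polynomial x ↦ min(2x_j, x_j, 1) in n variables, and for 1 ≤ i ≤ k let f_i be the tropical product (0·x_{i_1} ⊕ τ_{i_1}) ⊙ (0·x_{i_2} ⊕ τ_{i_2}) ⊙ (0·x_{i_3} ⊕ τ_{i_3}). Then the tropical prevariety P = ⋂_{j=1}^n T(h_j) ∩ ⋂_{i=1}^k T(f_i) equals {(s(a_1), …, s(a_n)) : a ∈ {True, False}^n is a satisfying assignment of φ}, where s(True) = 1 and s(False) = 0. In particular, P is nonempty if and only if φ is satisfiable. -/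

import Mathlib

open Finset Pointwise

/-- The affine-linear function given by a tropical term with coefficient `c`
and exponent vector `α`. -/
def tropTerm {n : ℕ} (c : ℝ) (α : Fin n → ℕ) (x : Fin n → ℝ) : ℝ :=
  c + ∑ j, (α j : ℝ) * x j

/-- The tropical hypersurface of the tropical polynomial with support `A`
and coefficients `c`: the set of points where the minimum of the terms is
attained at least twice. -/
def tropHyp {n : ℕ} (A : Finset (Fin n → ℕ)) (c : (Fin n → ℕ) → ℝ) :
    Set (Fin n → ℝ) :=
  {x | ∃ α ∈ A, ∃ β ∈ A, α ≠ β ∧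
    tropTerm (c α) α x = tropTerm (c β) β x ∧
    ∀ γ ∈ A, tropTerm (c α) α x ≤ tropTerm (c γ) γ x}

/-- A tropical polynomial: a (finite) support of exponent vectors, and coefficients. -/
structure TropPoly (n : ℕ) where
  supp : Finset (Fin n → ℕ)
  coeff : (Fin n → ℕ) → ℝ

def TropPoly.hyp {n : ℕ} (f : TropPoly n) : Set (Fin n → ℝ) :=
  tropHyp f.supp f.coeff

/-- Tropical product of two tropical polynomials. -/
noncomputable def TropPoly.mul {n : ℕ} (f g : TropPoly n) : TropPoly n where
  supp := f.supp + g.supp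
  coeff := fun γ =>
    sInf {r | ∃ α ∈ f.supp, ∃ β ∈ g.supp, α + β = γ ∧ r = f.coeff α + g.coeff β}

/-- The tropical multiplicative unit (the constant polynomial `0`). -/
def TropPoly.one (n : ℕ) : TropPoly n := ⟨{0}, fun _ => 0⟩

/-- Tropical product of a list of tropical polynomials. -/
noncomputable def TropPoly.listProd {n : ℕ} (l : List (TropPoly n)) : TropPoly n :=
  l.foldr TropPoly.mul (TropPoly.one n)

/-- The exponent vector `k · e_i`. -/
def single {n : ℕ} (i : Fin n) (k : ℕ) : Fin n → ℕ :=
  fun j => if j = i then k else 0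

/-- The structural tropical polynomial `h_j = 0·x_j² ⊕ 0·x_j ⊕ 1`. -/
def structuralPoly {n : ℕ} (j : Fin n) : TropPoly n :=
  ⟨{single j 2, single j 1, 0}, fun α => if α = 0 then (1 : ℝ) else 0⟩

/-- The tropical polynomial `0·x_j ⊕ τ` encoding the literal `y_j^τ`
(with `s(True) = 1`, `s(False) = 0`). -/
def literalPoly {n : ℕ} (j : Fin n) (τ : Bool) : TropPoly n :=
  ⟨{single j 1, 0}, fun α => if α = 0 then (if τ then (1 : ℝ) else 0) else 0⟩

/-- The clause tropical polynomial
`f_i = (0·x_{i₁} ⊕ τ_{i₁}) ⊙ (0·x_{i₂} ⊕ τ_{i₂}) ⊙ (0·x_{i₃} ⊕ τ_{i₃})`. -/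
noncomputable def clausePoly {n : ℕ} (idx : Fin 3 → Fin n) (τ : Fin 3 → Bool) :
    TropPoly n :=
  TropPoly.listProd [literalPoly (idx 0) (τ 0), literalPoly (idx 1) (τ 1),
    literalPoly (idx 2) (τ 2)]

/-- A Boolean assignment `a` satisfies the 3-SAT formula with clauses given by
variable indices `idx i` and signs `sgn i` (literal `y^1 = y`, `y^0 = ¬y`) iff
in every clause some literal evaluates to `True`. -/
def Satisfies {n k : ℕ} (idx : Fin k → Fin 3 → Fin n)
    (sgn : Fin k → Fin 3 → Bool) (a : Fin n → Bool) : Prop :=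
  ∀ i : Fin k, ∃ r : Fin 3, a (idx i r) = sgn i r

theorem tropTerm_add' {n : ℕ} (c d : ℝ) (α β : Fin n → ℕ) (x : Fin n → ℝ) :
    tropTerm (c + d) (α + β) x = tropTerm c α x + tropTerm d β x := by
  simp only [tropTerm, Pi.add_apply, Nat.cast_add, add_mul, Finset.sum_add_distrib]
  ring

theorem mul_fin {n : ℕ} (f g : TropPoly n) (γ : Fin n → ℕ) :
    {r | ∃ α ∈ f.supp, ∃ β ∈ g.supp, α + β = γ ∧ r = f.coeff α + g.coeff β}.Finite := by
  apply ((f.supp ×ˢ g.supp).image (fun p => f.coeff p.1 + g.coeff p.2)).finite_toSet.subset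
  rintro r ⟨α, ha, β, hb, -, rfl⟩
  simp only [Finset.coe_image, Set.mem_image, Finset.mem_coe, Finset.mem_product]
  exact ⟨(α, β), ⟨ha, hb⟩, rfl⟩

theorem mul_le {n : ℕ} (f g : TropPoly n) (x : Fin n → ℝ) {α β : Fin n → ℕ}
    (ha : α ∈ f.supp) (hb : β ∈ g.supp) :
    tropTerm ((f.mul g).coeff (α + β)) (α + β) x ≤
      tropTerm (f.coeff α) α x + tropTerm (g.coeff β) β x := by
  rw [← tropTerm_add']
  have : (f.mul g).coeff (α + β) ≤ f.coeff α + g.coeff β :=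
    csInf_le (mul_fin f g _).bddBelow ⟨α, ha, β, hb, rfl, rfl⟩
  unfold tropTerm
  linarith

theorem mul_ex {n : ℕ} (f g : TropPoly n) (x : Fin n → ℝ) {γ : Fin n → ℕ}
    (h : γ ∈ (f.mul g).supp) : ∃ α ∈ f.supp, ∃ β ∈ g.supp, α + β = γ ∧
    tropTerm ((f.mul g).coeff γ) γ x =
      tropTerm (f.coeff α) α x + tropTerm (g.coeff β) β x := by
  obtain ⟨α, ha, β, hb, e⟩ := Finset.mem_add.1 h
  have hne : {r | ∃ α ∈ f.supp, ∃ β ∈ g.supp, α + β = γ ∧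
    r = f.coeff α + g.coeff β}.Nonempty := ⟨_, α, ha, β, hb, e, rfl⟩
  obtain ⟨α', ha', β', hb', e', h'⟩ := hne.csInf_mem (mul_fin f g γ)
  refine ⟨α', ha', β', hb', e', ?_⟩
  rw [← tropTerm_add', e', ← h']
  rfl

theorem mem_mul_hyp {n : ℕ} (f g : TropPoly n) (hf : f.supp.Nonempty)
    (hg : g.supp.Nonempty) (x : Fin n → ℝ) :
    x ∈ (f.mul g).hyp ↔ x ∈ f.hyp ∨ x ∈ g.hyp := by
  obtain ⟨α₀, ha₀, hα₀⟩ := Finset.exists_min_image f.supp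
    (fun α => tropTerm (f.coeff α) α x) hf
  obtain ⟨β₀, hb₀, hβ₀⟩ := Finset.exists_min_image g.supp
    (fun α => tropTerm (g.coeff α) α x) hg
  have hlow : ∀ γ ∈ (f.mul g).supp, tropTerm (f.coeff α₀) α₀ x + tropTerm (g.coeff β₀) β₀ x
      ≤ tropTerm ((f.mul g).coeff γ) γ x := by
    intro γ hγ
    obtain ⟨α, ha, β, hb, e, h⟩ := mul_ex f g x hγ
    have := hα₀ α ha
    have := hβ₀ β hb
    linarith
  have hmem : ∀ α ∈ f.supp, ∀ β ∈ g.supp, α + β ∈ (f.mul g).supp :=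
    fun α ha β hb => Finset.add_mem_add ha hb
  constructor
  · rintro ⟨γ, hγ, δ, hδ, hne, heq, hmin⟩
    by_contra! hcon
    obtain ⟨h1, h2⟩ := hcon
    have key : ∀ γ ∈ (f.mul g).supp, tropTerm ((f.mul g).coeff γ) γ x ≤
        tropTerm (f.coeff α₀) α₀ x + tropTerm (g.coeff β₀) β₀ x → γ = α₀ + β₀ := by
      intro γ hγ hle
      obtain ⟨α, ha, β, hb, e, h⟩ := mul_ex f g x hγ
      have i1 := hα₀ α ha
      have i2 := hβ₀ β hb
      have e1 : α₀ = α := by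
        by_contra hn
        exact h1 ⟨α₀, ha₀, α, ha, hn, by linarith, hα₀⟩
      have e2 : β₀ = β := by
        by_contra hn
        exact h2 ⟨β₀, hb₀, β, hb, hn, by linarith, hβ₀⟩
      rw [← e, e1, e2]
    have m := (hmin _ (hmem _ ha₀ _ hb₀)).trans (mul_le f g x ha₀ hb₀)
    exact hne ((key γ hγ m).trans (key δ hδ (heq ▸ m)).symm)
  · rintro (⟨α, ha, β, hb, hne, heq, hmin⟩ | ⟨α, ha, β, hb, hne, heq, hmin⟩)
    · have l1 := mul_le f g x ha hb₀
      have l2 := mul_le f g x hb hb₀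
      have m1 := hlow _ (hmem _ ha _ hb₀)
      have m2 := hlow _ (hmem _ hb _ hb₀)
      have q := hmin _ ha₀
      refine ⟨α + β₀, hmem _ ha _ hb₀, β + β₀, hmem _ hb _ hb₀, by simpa using hne,
        by linarith, fun γ hγ => ?_⟩
      have := hlow γ hγ
      linarith
    · have l1 := mul_le f g x ha₀ ha
      have l2 := mul_le f g x ha₀ hb
      have m1 := hlow _ (hmem _ ha₀ _ ha)
      have m2 := hlow _ (hmem _ ha₀ _ hb)
      have q := hmin _ hb₀
      refine ⟨α₀ + α, hmem _ ha₀ _ ha, α₀ + β, hmem _ ha₀ _ hb, by simpa using hne,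
        by linarith, fun γ hγ => ?_⟩
      have := hlow γ hγ
      linarith

theorem tropTerm_single {n : ℕ} (c : ℝ) (j : Fin n) (k : ℕ) (x : Fin n → ℝ) :
    tropTerm c (single j k) x = c + k * x j := by
  simp [tropTerm, single]

theorem tropTerm_zero {n : ℕ} (c : ℝ) (x : Fin n → ℝ) :
    tropTerm c 0 x = c := by
  simp [tropTerm]

theorem single_inj {n : ℕ} (j : Fin n) {k l : ℕ} (h : k ≠ l) : single j k ≠ single j l := by
  intro e
  apply h
  simpa [single] using congrFun e j

theorem single_ne {n : ℕ} (j : Fin n) {k : ℕ} (h : k ≠ 0) : single j k ≠ 0 := by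
  intro e
  apply h
  simpa [single] using congrFun e j

theorem one_hyp {n : ℕ} (x : Fin n → ℝ) : x ∉ (TropPoly.one n).hyp := by
  rintro ⟨α, ha, β, hb, hne, -⟩
  simp only [TropPoly.one, Finset.mem_singleton] at ha hb
  exact hne (ha.trans hb.symm)

theorem literal_hyp {n : ℕ} (j : Fin n) (τ : Bool) (x : Fin n → ℝ) :
    x ∈ (literalPoly j τ).hyp ↔ x j = if τ then 1 else 0 := by
  have h1 := single_ne j one_ne_zero
  have h1' := h1.symm
  simp only [TropPoly.hyp, tropHyp, literalPoly, Set.mem_setOf_eq, Finset.mem_insert,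
    Finset.mem_singleton, exists_eq_or_imp, exists_eq_left, forall_eq_or_imp, forall_eq,
    tropTerm_single, tropTerm_zero, h1, h1', if_true, if_false, ne_eq, not_true, not_false_iff,
    false_and, true_and, false_or, or_false, Nat.cast_one, one_mul, zero_add]
  constructor
  · rintro (h | h) <;> linarith [h.1]
  · intro h
    left
    exact ⟨h, le_rfl, h.le⟩

theorem structural_hyp {n : ℕ} (j : Fin n) (x : Fin n → ℝ) :
    x ∈ (structuralPoly j).hyp ↔ x j = 1 ∨ x j = 0 := by
  have h1 := single_ne j one_ne_zero
  have h1' := h1.symm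
  have h2 := single_ne j two_ne_zero
  have h2' := h2.symm
  have h3 := single_inj j (show 1 ≠ 2 by norm_num)
  have h3' := h3.symm
  simp only [TropPoly.hyp, tropHyp, structuralPoly, Set.mem_setOf_eq, Finset.mem_insert,
    Finset.mem_singleton, exists_eq_or_imp, exists_eq_left, forall_eq_or_imp, forall_eq,
    tropTerm_single, tropTerm_zero, h1, h1', h2, h2', h3, h3', if_true, if_false, ne_eq,
    not_true, not_false_iff,
    false_and, true_and, false_or, or_false, Nat.cast_one, one_mul, zero_add, Nat.cast_ofNat]
  constructor
  · rintro ((h | h) | (h | h) | h | h) <;> obtain ⟨a, b, c, d⟩ := h <;>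
      first
      | (left; linarith)
      | (right; linarith)
  · rintro (h | h) <;> rw [h] <;> norm_num

theorem mul_ne {n : ℕ} (f g : TropPoly n) (hf : f.supp.Nonempty)
    (hg : g.supp.Nonempty) : (f.mul g).supp.Nonempty := Finset.Nonempty.add hf hg

theorem lit_ne {n : ℕ} (j : Fin n) (τ : Bool) : (literalPoly j τ).supp.Nonempty :=
  ⟨0, by simp [literalPoly]⟩

theorem clause_hyp {n : ℕ} (idx : Fin 3 → Fin n) (τ : Fin 3 → Bool) (x : Fin n → ℝ) :
    x ∈ (clausePoly idx τ).hyp ↔ ∃ r, x (idx r) = if τ r then 1 else 0 := by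
  have h0 : (TropPoly.one n).supp.Nonempty := ⟨0, by simp [TropPoly.one]⟩
  have l := fun r => lit_ne (idx r) (τ r)
  have m2 := mul_ne _ _ (l 2) h0
  have m1 := mul_ne _ _ (l 1) m2
  simp only [clausePoly, TropPoly.listProd, List.foldr]
  rw [mem_mul_hyp _ _ (l 0) m1, mem_mul_hyp _ _ (l 1) m2, mem_mul_hyp _ _ (l 2) h0]
  simp [literal_hyp, one_hyp, Fin.exists_fin_succ]

/-- The tropical prevariety built from the structural hypersurfaces `T(h_j)`
and the clause hypersurfaces `T(f_i)` of a 3-SAT formula equals the set of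
0/1-points corresponding to satisfying assignments; in particular it is
nonempty iff the formula is satisfiable. -/
theorem sat_prevariety (n k : ℕ) (idx : Fin k → Fin 3 → Fin n)
    (sgn : Fin k → Fin 3 → Bool)
    (hdistinct : ∀ i, Function.Injective (idx i)) :
    ((⋂ j : Fin n, (structuralPoly j).hyp) ∩
        ⋂ i : Fin k, (clausePoly (idx i) (sgn i)).hyp)
      = {x : Fin n → ℝ | ∃ a : Fin n → Bool, Satisfies idx sgn a ∧
          x = fun j => if a j then 1 else 0} ∧
    (((⋂ j : Fin n, (structuralPoly j).hyp) ∩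
        ⋂ i : Fin k, (clausePoly (idx i) (sgn i)).hyp).Nonempty ↔
      ∃ a : Fin n → Bool, Satisfies idx sgn a) := by
  have main : ((⋂ j : Fin n, (structuralPoly j).hyp) ∩
        ⋂ i : Fin k, (clausePoly (idx i) (sgn i)).hyp)
      = {x : Fin n → ℝ | ∃ a : Fin n → Bool, Satisfies idx sgn a ∧
          x = fun j => if a j then 1 else 0} := by
    have hb : ∀ a b : Bool, ((if a then (1:ℝ) else 0) = if b then 1 else 0) ↔ a = b := by
      intro a b
      cases a <;> cases b <;> simp
    ext x
    simp only [Set.mem_inter_iff, Set.mem_iInter, structural_hyp, clause_hyp, Set.mem_setOf_eq]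
    constructor
    · rintro ⟨h1, h2⟩
      classical
      have hx : x = fun j => if (decide (x j = 1)) then (1:ℝ) else 0 := by
        funext j
        rcases h1 j with h | h <;> simp [h]
      refine ⟨fun j => decide (x j = 1), fun i => ?_, hx⟩
      obtain ⟨r, hr⟩ := h2 i
      refine ⟨r, (hb _ _).1 ?_⟩
      rw [← hr]
      exact (congrFun hx _).symm
    · rintro ⟨a, ha, rfl⟩
      refine ⟨fun j => ?_, fun i => ?_⟩
      · cases a j <;> simp
      · obtain ⟨r, hr⟩ := ha i
        exact ⟨r, (hb _ _).2 hr⟩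
  refine ⟨main, ?_⟩
  rw [main]
  constructor
  · rintro ⟨x, a, ha, -⟩
    exact ⟨a, ha⟩
  · rintro ⟨a, ha⟩
    exact ⟨_, a, ha, rfl⟩
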